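/- arXiv:1609.01919 — 4 statements merged into one kernel-verified Lean document; each statement's English description precedes it below -/
import Mathlib

section
/- If μ : (ℕ → ℕ) → ℕ satisfies Feferman's mu-property, then μ has no associate: no function α : List ℕ → ℕ is an associate of μ. -/
/-- Feferman's mu-property: if `f` has a zero, then `μ f` points to a zero of `f`. -/
def FefermanMu (μ : (ℕ → ℕ) → ℕ) : Prop :=
  ∀ f : ℕ → ℕ, (∃ n, f n = 0) → f (μ f) = 0

/-- The initial segment `⟨β 0, …, β (k-1)⟩` of `β : ℕ → ℕ` as a list. -/
def initSeg (β : ℕ → ℕ) (k : ℕ) : List ℕ := (List.range k).map β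

/-- `α : List ℕ → ℕ` is an associate of `Φ : (ℕ → ℕ) → ℕ`, and moreover a
neighbourhood function. -/
def IsAssociate (α : List ℕ → ℕ) (Φ : (ℕ → ℕ) → ℕ) : Prop :=
  (∀ β : ℕ → ℕ, ∃ k : ℕ, 0 < α (initSeg β k)) ∧
  (∀ (β : ℕ → ℕ) (k : ℕ), 0 < α (initSeg β k) → α (initSeg β k) = Φ β + 1) ∧
  (∀ σ τ : List ℕ, 0 < α σ → σ <+: τ → α τ = α σ)

/-!
A functional with an associate is continuous on Baire space `ℕ → ℕ`. A functional `μ` with the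
mu-property is discontinuous at every `f` without zeros: if the values of `f` from `N` on are
replaced by `0`, the zeros of the result are exactly the numbers `≥ N`, so its image under `μ` tends
to infinity with `N`, although these truncations converge to `f`.
-/

open Filter Set Topology

theorem initSeg_eq_iff_mem_cylinder {β γ : ℕ → ℕ} {k : ℕ} :
    initSeg γ k = initSeg β k ↔ γ ∈ PiNat.cylinder β k := by
  simp [initSeg, PiNat.mem_cylinder_iff]

namespace IsAssociate

variable {α : List ℕ → ℕ} {Φ : (ℕ → ℕ) → ℕ}

theorem eq_of_initSeg_eq (hα : IsAssociate α Φ) {β γ : ℕ → ℕ} {k : ℕ}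
    (hβ : 0 < α (initSeg β k)) (hγβ : initSeg γ k = initSeg β k) : Φ γ = Φ β := by
  obtain ⟨-, hval, -⟩ := hα
  refine Nat.succ_injective ?_
  calc
    Φ γ + 1 = α (initSeg γ k) := (hval γ k (hγβ ▸ hβ)).symm
    _ = α (initSeg β k) := by rw [hγβ]
    _ = Φ β + 1 := hval β k hβ

theorem continuous (hα : IsAssociate α Φ) : Continuous Φ := by
  refine IsLocallyConstant.continuous ((IsLocallyConstant.iff_eventually_eq Φ).2 fun β ↦ ?_)
  obtain ⟨k, hk⟩ := hα.1 β
  filter_upwards [(PiNat.isOpen_cylinder _ β k).mem_nhds (PiNat.self_mem_cylinder β k)] with γ hγ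
  exact hα.eq_of_initSeg_eq hk (initSeg_eq_iff_mem_cylinder.2 hγ)

end IsAssociate

theorem tendsto_indicator_Iio_atTop {ι X : Type*} [Preorder ι] [NoMaxOrder ι] [Zero X]
    [TopologicalSpace X] (f : ι → X) :
    Tendsto (fun a ↦ (Iio a).indicator f) atTop (𝓝 f) := by
  refine tendsto_pi_nhds.2 fun i ↦ tendsto_nhds_of_eventually_eq ?_
  filter_upwards [eventually_gt_atTop i] with a ha
  exact indicator_of_mem (mem_Iio.2 ha) f

namespace FefermanMu

variable {μ : (ℕ → ℕ) → ℕ} {f : ℕ → ℕ}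

theorem le_apply_indicator_Iio (hμ : FefermanMu μ) (hf : ∀ n, f n ≠ 0) (N : ℕ) :
    N ≤ μ ((Iio N).indicator f) := by
  have hzero : (Iio N).indicator f (μ ((Iio N).indicator f)) = 0 :=
    hμ _ ⟨N, indicator_of_notMem self_notMem_Iio f⟩
  by_contra! hlt
  exact hf _ ((indicator_of_mem (mem_Iio.2 hlt) f).symm.trans hzero)

theorem not_continuousAt (hμ : FefermanMu μ) (hf : ∀ n, f n ≠ 0) : ¬ ContinuousAt μ f := by
  intro hcont
  have hlim : Tendsto (fun N ↦ μ ((Iio N).indicator f)) atTop (𝓝 (μ f)) :=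
    hcont.tendsto.comp (tendsto_indicator_Iio_atTop f)
  have hinfty : Tendsto (fun N ↦ μ ((Iio N).indicator f)) atTop atTop :=
    tendsto_atTop_mono (hμ.le_apply_indicator_Iio hf) tendsto_id
  exact not_tendsto_nhds_of_tendsto_atTop hinfty _ hlim

end FefermanMu

/-- A functional satisfying Feferman's mu-property has no associate. -/
theorem feferman_mu_has_no_associate (μ : (ℕ → ℕ) → ℕ) (hμ : FefermanMu μ) :
    ∀ α : List ℕ → ℕ, ¬ IsAssociate α μ := by
  intro α hα
  exact hμ.not_continuousAt (f := 1) (fun _ ↦ one_ne_zero) hα.continuous.continuousAt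
end

section
/- Let f : ℕ → ℕ and let t f : ℕ → ℚ be the associated monotone sequence. Then: (a) t f is nondecreasing and 0 ≤ t f k ≤ 1 for all k; and (b) for every K : ℕ such that |t f N − t f M| < 1/2 for all N, M ≥ K, one has (∃ m, f m = 0) ↔ (∃ m ≤ K, f m = 0). -/
/-- The monotone rational sequence associated to `f : ℕ → ℕ`:
`t f k = 0` if `f i ≠ 0` for all `i ≤ k`, and `t f k = 1 - 2⁻ᵏ` otherwise. -/
def t (f : ℕ → ℕ) (k : ℕ) : ℚ :=
  if ∀ i ≤ k, f i ≠ 0 then 0 else 1 - 1 / 2 ^ k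

section

variable {f : ℕ → ℕ} {k l : ℕ}

theorem t_eq_zero_of_forall_ne_zero (h : ∀ i ≤ k, f i ≠ 0) : t f k = 0 :=
  if_pos h

theorem t_eq_one_sub_of_exists_eq_zero (h : ∃ i ≤ k, f i = 0) : t f k = 1 - 1 / 2 ^ k :=
  if_neg fun hne => let ⟨i, hi, hfi⟩ := h; hne i hi hfi

theorem t_nonneg (f : ℕ → ℕ) (k : ℕ) : 0 ≤ t f k := by
  have hpow : (1 : ℚ) / 2 ^ k ≤ 1 := by
    simpa only [pow_zero, div_one] using
      one_div_pow_le_one_div_pow_of_le (one_le_two (α := ℚ)) k.zero_le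
  unfold t
  split_ifs
  · exact le_rfl
  · exact sub_nonneg.mpr hpow

theorem t_le_one (f : ℕ → ℕ) (k : ℕ) : t f k ≤ 1 := by
  unfold t
  split_ifs
  · exact zero_le_one
  · exact sub_le_self 1 (by positivity)

theorem t_monotone (f : ℕ → ℕ) : Monotone (t f) := by
  intro k l hkl
  by_cases hk : ∃ i ≤ k, f i = 0
  · have hl : ∃ i ≤ l, f i = 0 := hk.imp fun _ => And.imp_left (·.trans hkl)
    rw [t_eq_one_sub_of_exists_eq_zero hk, t_eq_one_sub_of_exists_eq_zero hl]
    exact sub_le_sub_left (one_div_pow_le_one_div_pow_of_le one_le_two hkl) 1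
  · push Not at hk
    exact (t_eq_zero_of_forall_ne_zero hk).trans_le (t_nonneg f l)

theorem one_half_le_t (hk : k ≠ 0) (h : ∃ i ≤ k, f i = 0) : 1 / 2 ≤ t f k := by
  have hpow : (1 : ℚ) / 2 ^ k ≤ 1 / 2 := by
    simpa only [pow_one] using
      one_div_pow_le_one_div_pow_of_le (one_le_two (α := ℚ)) (Nat.one_le_iff_ne_zero.mpr hk)
  rw [t_eq_one_sub_of_exists_eq_zero h]
  linarith

/- If the first zero came after `k`, then `t f` would jump from `0` at `k` to at least `1 / 2`
at `l`. -/
theorem exists_le_eq_zero_of_t_sub_t_lt_half (hl : ∃ i ≤ l, f i = 0)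
    (hlt : t f l - t f k < 1 / 2) : ∃ i ≤ k, f i = 0 := by
  by_contra! hk
  have hl0 : l ≠ 0 := by
    rintro rfl
    obtain ⟨i, hi, hfi⟩ := hl
    exact hk i (hi.trans k.zero_le) hfi
  rw [t_eq_zero_of_forall_ne_zero hk, sub_zero] at hlt
  exact hlt.not_ge (one_half_le_t hl0 hl)

end

/-- (a) `t f` is nondecreasing and stays in `[0,1]`; (b) if `K` is such that
`|t f N - t f M| < 1/2` for all `N, M ≥ K`, then `f` has a zero iff it has a
zero below `K`. -/
theorem t_properties (f : ℕ → ℕ) :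
    ((∀ k, t f k ≤ t f (k + 1)) ∧ (∀ k, 0 ≤ t f k ∧ t f k ≤ 1)) ∧
    (∀ K : ℕ, (∀ N M, K ≤ N → K ≤ M → |t f N - t f M| < 1 / 2) →
      ((∃ m, f m = 0) ↔ ∃ m ≤ K, f m = 0)) := by
  refine ⟨⟨fun k => t_monotone f k.le_succ, fun k => ⟨t_nonneg f k, t_le_one f k⟩⟩,
    fun K hK => ⟨?_, fun ⟨m, _, hm⟩ => ⟨m, hm⟩⟩⟩
  rintro ⟨m, hm⟩
  have hclose : |t f (max m K) - t f K| < 1 / 2 := hK _ _ (le_max_right m K) le_rfl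
  exact exists_le_eq_zero_of_t_sub_t_lt_half ⟨m, le_max_left m K, hm⟩ (abs_lt.mp hclose).2
end

section
/- Suppose φ : (ℕ → ℕ) → ℕ satisfies the existence-functional property. Let c : ℕ → ℚ be nondecreasing with 0 ≤ c n ≤ 1 for all n, and let k : ℕ. For K : ℕ define g K : ℕ → ℕ by g K N = 0 if c N − c K > 1/(k+1) and g K N = 1 otherwise. Then: (a) there exists K with φ (g K) ≠ 0; and (b) for every K with φ (g K) ≠ 0, one has |c N − c M| ≤ 1/(k+1) for all N, M ≥ K. Hence K(c,k) := the least K with φ (g K) ≠ 0 is a modulus of convergence for c computed from φ. -/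
/-- The existence-functional property: `φ f = 0` iff `f` has a zero. -/
def ExistsFunctional (φ : (ℕ → ℕ) → ℕ) : Prop :=
  ∀ f : ℕ → ℕ, (∃ n, f n = 0) ↔ φ f = 0

/-!
The `K` with `φ (g K) ≠ 0` are exactly those for which `c` never exceeds `c K` by more than `ε`.
If there were none, `c` could be made to jump by more than `ε` as often as desired, contradicting
boundedness. For each such `K`, monotonicity puts all terms from `K` on into `[c K, c K + ε]`.
-/

theorem ExistsFunctional.ne_zero_iff {φ : (ℕ → ℕ) → ℕ} (hφ : ExistsFunctional φ) {f : ℕ → ℕ} :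
    φ f ≠ 0 ↔ ∀ n, f n ≠ 0 := by
  rw [ne_eq, ← hφ f, not_exists]

theorem exists_forall_sub_le_of_bddAbove {ι α : Type*} [Nonempty ι] [AddCommGroup α]
    [LinearOrder α] [IsOrderedAddMonoid α] [Archimedean α] {c : ι → α} {ε : α}
    (hbdd : BddAbove (Set.range c)) (hε : 0 < ε) : ∃ K, ∀ N, c N - c K ≤ ε := by
  by_contra! hjump
  obtain ⟨b, hb⟩ := hbdd
  obtain ⟨i₀⟩ := ‹Nonempty ι›
  have hclimb (n : ℕ) : ∃ K, n • ε ≤ c K - c i₀ := by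
    induction n with
    | zero => exact ⟨i₀, by simp⟩
    | succ n ih =>
      obtain ⟨K, hK⟩ := ih
      obtain ⟨N, hN⟩ := hjump K
      refine ⟨N, ?_⟩
      calc (n + 1) • ε = n • ε + ε := succ_nsmul ε n
        _ ≤ (c K - c i₀) + (c N - c K) := add_le_add hK hN.le
        _ = c N - c i₀ := sub_add_sub_cancel' _ _ _
  obtain ⟨n, hn⟩ := exists_lt_nsmul hε (b - c i₀)
  obtain ⟨K, hK⟩ := hclimb n
  have hcK : c K ≤ b := hb ⟨K, rfl⟩
  exact (hn.trans_le hK).not_ge (sub_le_sub_right hcK _)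

theorem abs_sub_le_of_monotone_of_forall_sub_le {ι α : Type*} [Preorder ι] [AddCommGroup α]
    [LinearOrder α] [IsOrderedAddMonoid α] {c : ι → α} {ε : α} {K N M : ι} (hc : Monotone c)
    (hK : ∀ n, c n - c K ≤ ε) (hN : K ≤ N) (hM : K ≤ M) : |c N - c M| ≤ ε := by
  have hmem (n : ι) (hn : K ≤ n) : c n ∈ Set.Icc (c K) (c K + ε) :=
    ⟨hc hn, sub_le_iff_le_add'.1 (hK n)⟩
  calc |c N - c M| ≤ c K + ε - c K :=
        abs_sub_le_of_le_of_le (hmem N hN).1 (hmem N hN).2 (hmem M hM).1 (hmem M hM).2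
    _ = ε := add_sub_cancel_left _ _

theorem modulus_from_exists_functional_general {α : Type*} [AddCommGroup α] [LinearOrder α]
    [IsOrderedAddMonoid α] [Archimedean α] {φ : (ℕ → ℕ) → ℕ} (hφ : ExistsFunctional φ)
    {c : ℕ → α} (hc : Monotone c) (hbdd : BddAbove (Set.range c)) {ε : α} (hε : 0 < ε)
    {g : ℕ → ℕ → ℕ} (hg : ∀ K N, g K N = 0 ↔ ε < c N - c K) :
    (∃ K, φ (g K) ≠ 0) ∧
    (∀ K, φ (g K) ≠ 0 → ∀ N M, K ≤ N → K ≤ M → |c N - c M| ≤ ε) := by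
  have hφg (K : ℕ) : φ (g K) ≠ 0 ↔ ∀ N, c N - c K ≤ ε := by
    simp only [hφ.ne_zero_iff, ne_eq, hg, not_lt]
  simp only [hφg]
  exact ⟨exists_forall_sub_le_of_bddAbove hbdd hε,
    fun _ hK _ _ hN hM ↦ abs_sub_le_of_monotone_of_forall_sub_le hc hK hN hM⟩

/-- From an existence functional `φ` one computes a modulus of convergence for any
nondecreasing rational sequence `c` in the unit interval: with
`g K N = 0` if `c N - c K > 1/(k+1)` and `g K N = 1` otherwise, (a) there is `K`
with `φ (g K) ≠ 0`, and (b) any such `K` is a modulus of convergence for `c`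
at precision `1/(k+1)`. -/
theorem modulus_from_exists_functional (φ : (ℕ → ℕ) → ℕ)
    (hφ : ExistsFunctional φ)
    (c : ℕ → ℚ) (hmono : ∀ n, c n ≤ c (n + 1)) (hbound : ∀ n, 0 ≤ c n ∧ c n ≤ 1)
    (k : ℕ) (g : ℕ → ℕ → ℕ)
    (hg : ∀ K N, g K N = if 1 / ((k : ℚ) + 1) < c N - c K then 0 else 1) :
    (∃ K, φ (g K) ≠ 0) ∧
    (∀ K, φ (g K) ≠ 0 → ∀ N M, K ≤ N → K ≤ M → |c N - c M| ≤ 1 / ((k : ℚ) + 1)) :=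
  modulus_from_exists_functional_general hφ (monotone_nat_of_le_succ hmono)
    ⟨1, Set.forall_mem_range.2 fun n ↦ (hbound n).2⟩ Nat.one_div_pos_of_nat
    fun K N ↦ by simp only [hg, ite_eq_left_iff, one_ne_zero, imp_false, not_not]
end

section
/- Let e be a code for a partial recursive function (Nat.Partrec.Code) and n : ℕ, and let seq e n : ℕ → ℚ be the associated halting sequence. Then: (a) seq e n is nondecreasing and 0 ≤ seq e n k ≤ 1 for all k; and (b) for every K : ℕ such that |seq e n N − seq e n M| < 1/2 for all N, M ≥ K, the computation e on input n halts (i.e., (e.eval n).Dom) if and only if the step-bounded evaluation with K steps returns a value (i.e., (Nat.Partrec.Code.evaln K e n).isSome). -/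
/-- The halting sequence associated to a partial recursive code `e` and input `n`:
`seq e n k = 1 - 2⁻ᵏ` if the step-bounded evaluation `evaln k e n` returns a value,
and `0` otherwise. -/
def seq (e : Nat.Partrec.Code) (n : ℕ) (k : ℕ) : ℚ :=
  if (Nat.Partrec.Code.evaln k e n).isSome then 1 - 1 / 2 ^ k else 0

/-!
If `e` halts on `n`, then `seq e n` converges to `1`; until the step-bounded evaluation succeeds,
however, the sequence is `0`. So once all later terms stay within some `ε < 1` of the `K`-th term,
a halting computation must already have been found after `K` steps.
-/

section

open Filter
open scoped Topology
open Nat.Partrec (Code)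

variable {e : Code} {n : ℕ}

lemma isSome_evaln_mono {k l : ℕ} (hkl : k ≤ l) (hk : (Code.evaln k e n).isSome) :
    (Code.evaln l e n).isSome := by
  obtain ⟨x, hx⟩ := Option.isSome_iff_exists.mp hk
  exact Option.isSome_iff_exists.mpr ⟨x, Code.evaln_mono hkl hx⟩

lemma eval_dom_iff_exists_isSome_evaln :
    (e.eval n).Dom ↔ ∃ k, (Code.evaln k e n).isSome := by
  simp only [Part.dom_iff_mem, Code.evaln_complete, Option.isSome_iff_exists, Option.mem_def]
  exact exists_comm

lemma seq_of_isSome {k : ℕ} (hk : (Code.evaln k e n).isSome) : seq e n k = 1 - 1 / 2 ^ k :=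
  if_pos hk

lemma seq_of_not_isSome {k : ℕ} (hk : ¬(Code.evaln k e n).isSome) : seq e n k = 0 :=
  if_neg hk

lemma seq_mem_Icc (e : Code) (n k : ℕ) : seq e n k ∈ Set.Icc 0 1 := by
  by_cases hk : (Code.evaln k e n).isSome
  · have h_pow : (1 : ℚ) / 2 ^ k ≤ 1 := div_le_self zero_le_one (one_le_pow₀ one_le_two)
    rw [seq_of_isSome hk]
    exact ⟨sub_nonneg.mpr h_pow, sub_le_self 1 (by positivity)⟩
  · rw [seq_of_not_isSome hk]
    exact ⟨le_rfl, zero_le_one⟩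

lemma monotone_seq (e : Code) (n : ℕ) : Monotone (seq e n) := by
  intro k l hkl
  by_cases hk : (Code.evaln k e n).isSome
  · rw [seq_of_isSome hk, seq_of_isSome (isSome_evaln_mono hkl hk)]
    gcongr
    exact one_le_two
  · rw [seq_of_not_isSome hk]
    exact (seq_mem_Icc e n l).1

lemma tendsto_seq_of_eval_dom (he : (e.eval n).Dom) : Tendsto (seq e n) atTop (𝓝 1) := by
  obtain ⟨k, hk⟩ := eval_dom_iff_exists_isSome_evaln.mp he
  have h_eventually : ∀ᶠ l in atTop, 1 - (1 / 2 : ℚ) ^ l = seq e n l := by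
    filter_upwards [eventually_ge_atTop k] with l hkl
    rw [seq_of_isSome (isSome_evaln_mono hkl hk), one_div_pow]
  have h_pow : Tendsto (fun l : ℕ ↦ (1 / 2 : ℚ) ^ l) atTop (𝓝 0) :=
    tendsto_pow_atTop_nhds_zero_of_lt_one (by norm_num) (by norm_num)
  simpa only [sub_zero] using (h_pow.const_sub 1).congr' h_eventually

lemma isSome_evaln_of_abs_seq_sub_le {K : ℕ} {ε : ℚ} (hε : ε < 1)
    (hK : ∀ N, K ≤ N → |seq e n N - seq e n K| ≤ ε) (he : (e.eval n).Dom) :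
    (Code.evaln K e n).isSome := by
  have h_dist : |1 - seq e n K| ≤ ε :=
    le_of_tendsto ((tendsto_seq_of_eval_dom he).sub_const _).abs
      ((eventually_ge_atTop K).mono hK)
  by_contra h_none
  rw [seq_of_not_isSome h_none, sub_zero, abs_one] at h_dist
  exact hε.not_ge h_dist

end

/-- (a) `seq e n` is nondecreasing and stays in `[0,1]`; (b) if `K` is such that
`|seq e n N - seq e n M| < 1/2` for all `N, M ≥ K`, then `e` halts on `n` iff the
step-bounded evaluation with `K` steps returns a value. -/
theorem seq_properties (e : Nat.Partrec.Code) (n : ℕ) :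
    ((∀ k, seq e n k ≤ seq e n (k + 1)) ∧ (∀ k, 0 ≤ seq e n k ∧ seq e n k ≤ 1)) ∧
    (∀ K : ℕ, (∀ N M, K ≤ N → K ≤ M → |seq e n N - seq e n M| < 1 / 2) →
      ((e.eval n).Dom ↔ (Nat.Partrec.Code.evaln K e n).isSome)) := by
  refine ⟨⟨fun k ↦ monotone_seq e n k.le_succ, seq_mem_Icc e n⟩, fun K hK ↦ ⟨?_, ?_⟩⟩
  · exact isSome_evaln_of_abs_seq_sub_le one_half_lt_one fun N hN ↦ (hK N K hN le_rfl).le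
  · exact fun h_some ↦ eval_dom_iff_exists_isSome_evaln.mpr ⟨K, h_some⟩
end
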